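/- Let Q be an n×n invertible Hermitian complex matrix whose spectrum is contained in [−b, −a] ∪ [a, b] with 0 < a ≤ b, and let v ∈ ℂⁿ, v ≠ 0. Let ω₁, …, ω_m ≥ 0 and 0 < τ₁ ≤ τ₂ ≤ … ≤ τ_m be real numbers such that the rational function r(t) = Σ_{i=1}^{m} ωᵢ t/(t² + τᵢ) satisfies |sign(t) − r(t)| ≤ ε/2 for all t ∈ [−b, −a] ∪ [a, b], for some ε > 0. Let V̂ be an n×k matrix with orthonormal columns, first column v/‖v‖₂, and T̂ a k×k real symmetric tridiagonal matrix with positive subdiagonal entries, β̂ > 0 and v̂ a unit vector orthogonal to the columns of V̂, with Q² V̂ = V̂ T̂ + β̂ v̂ e_kᵀ (the Lanczos relation for Q² and v). Define the multishift-CG iterates x_k^i = V̂ (T̂ + τᵢ I)^{−1} e₁ ‖v‖₂ and residuals r_k^i = v − (Q² + τᵢ I) x_k^i for i = 1, …, m, and set x^{pfe} = Σ_{i=1}^{m} ωᵢ Q (Q² + τᵢ I)^{−1} v and x_k = Σ_{i=1}^{m} ωᵢ Q x_k^i. Then ‖x^{pfe} − x_k‖₂ ≤ (1 + ε/2) ‖r_k^1‖₂.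 -/

import Mathlib

/-!
The residuals of the shifted systems are collinear: the Lanczos relation gives
`r_k^i = -‖v‖ β̂ ((T̂ + τᵢ I)⁻¹)_{k,1} v̂` (`shifted_residual_eq`). By Cramer's rule the corner entry
`((T̂ + s I)⁻¹)_{k,1}` equals `± ∏ T̂_{j+1,j} / det (T̂ + s I)`, whose numerator does not depend on the
shift `s` (`adjugate_corner`). Since `T̂ = V̂ᴴ Q² V̂` is positive semidefinite, the determinant is
positive and increasing in `s > 0`, so `r_k^i = ρᵢ r_k^1` with `0 ≤ ρᵢ ≤ 1` (`corner_inv_contract`).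

Hence `x^{pfe} - x_k = ∑ ωᵢ Q (Q² + τᵢ I)⁻¹ r_k^i = g(Q) r_k^1` with
`g(t) = ∑ ωᵢ ρᵢ t / (t² + τᵢ)`. For fixed `t` all terms of `r(t) = ∑ ωᵢ t / (t² + τᵢ)` have the same
sign, so `|g(t)| ≤ |r(t)| ≤ 1 + ε/2` on the spectrum of `Q` (`abs_damped_sum_le`), and the bound
follows by comparing coordinates in an orthonormal eigenbasis of `Q`.
-/

open Matrix Polynomial

/-- The Euclidean (l2) norm on `ℂⁿ`. -/
noncomputable def e2norm {n : ℕ} (x : Fin n → ℂ) : ℝ :=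
  Real.sqrt (∑ i, ‖x i‖ ^ 2)

open scoped ComplexOrder in
/-- The Lanczos relation forces `T = Vᴴ Q² V`, so that the real matrix `T` is positive
semidefinite. -/
lemma lanczos_posSemidef {n k : ℕ} {Q : Matrix (Fin n) (Fin n) ℂ} (hQ : Q.IsHermitian)
    {V : Matrix (Fin n) (Fin k) ℂ} (hVorth : Vᴴ * V = 1)
    {T : Matrix (Fin k) (Fin k) ℝ} (hTsym : T.IsHermitian) (β : ℂ)
    {w : Fin n → ℂ} (hw : star w ᵥ* V = 0) (e : Fin k → ℂ)
    (hrel : Q ^ 2 * V = V * T.map (algebraMap ℝ ℂ) + β • vecMulVec w e) :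
    T.PosSemidef := by
  have hw' : Vᴴ *ᵥ w = 0 := by
    have h := congrArg star hw
    rwa [star_vecMul, star_star, star_zero] at h
  have hT : T.map (algebraMap ℝ ℂ) = (Q * V)ᴴ * (Q * V) := by
    calc T.map (algebraMap ℝ ℂ) = Vᴴ * (Q ^ 2 * V) := by
          rw [hrel, Matrix.mul_add, ← Matrix.mul_assoc, hVorth, Matrix.one_mul, Matrix.mul_smul,
            mul_vecMulVec, hw', zero_vecMulVec, smul_zero, add_zero]
      _ = (Q * V)ᴴ * (Q * V) := by
          rw [conjTranspose_mul, hQ.eq, pow_two]; simp only [Matrix.mul_assoc]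
  refine PosSemidef.of_dotProduct_mulVec_nonneg hTsym fun x => ?_
  have h := (posSemidef_conjTranspose_mul_self (Q * V)).dotProduct_mulVec_nonneg
    (fun i => (x i : ℂ))
  rw [← hT] at h
  have h2 : star (fun i => (x i : ℂ)) ⬝ᵥ T.map (algebraMap ℝ ℂ) *ᵥ (fun i => (x i : ℂ))
      = ((star x ⬝ᵥ T *ᵥ x : ℝ) : ℂ) := by
    simp [dotProduct, mulVec]
  rw [h2] at h
  exact_mod_cast h

lemma det_add_smul_one {k : ℕ} {T : Matrix (Fin k) (Fin k) ℝ} (hT : T.IsHermitian) (s : ℝ) :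
    (T + s • 1).det = ∏ j, (hT.eigenvalues j + s) := by
  have h := eval_charpoly T (-s)
  rw [hT.charpoly_eq, Polynomial.eval_prod] at h
  have h1 : scalar (Fin k) (-s) - T = -(T + s • 1) := by
    ext i j; simp [Matrix.one_apply, scalar_apply, diagonal_apply]; split_ifs <;> ring
  rw [h1, det_neg, Fintype.card_fin] at h
  have h2 : ∏ j, Polynomial.eval (-s) (X - C ((hT.eigenvalues j : ℝ) : ℝ)) =
      (-1) ^ k * ∏ j, (hT.eigenvalues j + s) := by
    have h3 : (-1 : ℝ) ^ k = ∏ _j : Fin k, (-1 : ℝ) := by simp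
    rw [h3, ← Finset.prod_mul_distrib]
    refine Finset.prod_congr rfl fun j _ => ?_
    simp only [Polynomial.eval_sub, Polynomial.eval_X, Polynomial.eval_C]; ring
  exact (mul_left_cancel₀ (pow_ne_zero k (by norm_num)) (h2.symm.trans h)).symm

/-- The corner entry of the adjugate of `T + s I` is, up to sign, a minor which is triangular with
the subdiagonal of `T` on its diagonal; hence it does not depend on `s`. -/
lemma adjugate_corner {k : ℕ} (T : Matrix (Fin (k + 1)) (Fin (k + 1)) ℝ)
    (hTtri : ∀ i j : Fin (k + 1), 1 < ((i : ℤ) - (j : ℤ)).natAbs → T i j = 0) (s : ℝ) :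
    (T + s • 1).adjugate (Fin.last k) 0 = (-1) ^ k * ∏ i : Fin k, T i.succ i.castSucc := by
  rw [adjugate_fin_succ_eq_det_submatrix, det_of_isUpperTriangular]
  · simp [Fin.ext_iff]
  · intro i j hij
    have hij' : (j : ℕ) < i := hij
    have h1 : i.succ ≠ j.castSucc := by
      simp only [ne_eq, Fin.ext_iff, Fin.val_succ, Fin.val_castSucc]; omega
    suffices T i.succ j.castSucc = 0 by simpa [h1]
    apply hTtri
    simp only [Fin.val_succ, Fin.val_castSucc]; omega

lemma e2norm_sq {n : ℕ} (x : Fin n → ℂ) : e2norm x ^ 2 = ∑ i, ‖x i‖ ^ 2 :=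
  Real.sq_sqrt (Finset.sum_nonneg fun _ _ => by positivity)

lemma e2norm_nonneg {n : ℕ} (x : Fin n → ℂ) : 0 ≤ e2norm x := Real.sqrt_nonneg _

lemma e2norm_sq_eq {n : ℕ} (x : Fin n → ℂ) : ((e2norm x ^ 2 : ℝ) : ℂ) = star x ⬝ᵥ x := by
  rw [e2norm_sq]
  simp [dotProduct, ← Complex.normSq_eq_conj_mul_self, Complex.normSq_eq_norm_sq]

lemma e2norm_unitary {n : ℕ} {U : Matrix (Fin n) (Fin n) ℂ} (hU : Uᴴ * U = 1) (x : Fin n → ℂ) :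
    e2norm (U *ᵥ x) = e2norm x := by
  rw [← sq_eq_sq₀ (e2norm_nonneg _) (e2norm_nonneg _), ← Complex.ofReal_inj, e2norm_sq_eq,
    e2norm_sq_eq, star_mulVec, ← dotProduct_mulVec, mulVec_mulVec, hU, one_mulVec]

lemma e2norm_le_of_coord {n : ℕ} {x y : Fin n → ℂ} {C : ℝ} (hC : 0 ≤ C)
    (h : ∀ j, ‖x j‖ ≤ C * ‖y j‖) : e2norm x ≤ C * e2norm y := by
  rw [← sq_le_sq₀ (e2norm_nonneg _) (mul_nonneg hC (e2norm_nonneg _)), mul_pow, e2norm_sq,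
    e2norm_sq, Finset.mul_sum]
  gcongr with j
  rw [← mul_pow]
  exact pow_le_pow_left₀ (norm_nonneg _) (h j) 2

/-- `Q` acts diagonally on coordinates `Uᴴ x` with respect to its orthonormal eigenbasis. -/
lemma eigencoord_mulVec {n : ℕ} {Q : Matrix (Fin n) (Fin n) ℂ} (hQ : Q.IsHermitian)
    (x : Fin n → ℂ) (j : Fin n) :
    ((hQ.eigenvectorUnitary : Matrix (Fin n) (Fin n) ℂ)ᴴ *ᵥ (Q *ᵥ x)) j =
      hQ.eigenvalues j * ((hQ.eigenvectorUnitary : Matrix (Fin n) (Fin n) ℂ)ᴴ *ᵥ x) j := by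
  set U := (hQ.eigenvectorUnitary : Matrix (Fin n) (Fin n) ℂ) with hU
  have hUU : U * Uᴴ = 1 := Unitary.coe_mul_star_self hQ.eigenvectorUnitary
  have h := hQ.conjStarAlgAut_star_eigenvectorUnitary
  rw [Unitary.conjStarAlgAut_star_apply] at h
  have h2 : Uᴴ * Q = diagonal (RCLike.ofReal ∘ hQ.eigenvalues) * Uᴴ := by
    rw [← h, Matrix.mul_assoc _ _ Uᴴ, ← hU, hUU, Matrix.mul_one]; rfl
  rw [mulVec_mulVec, h2, ← mulVec_mulVec, mulVec_diagonal]
  rfl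

open scoped ComplexOrder in
lemma sq_add_smul_isUnit {n : ℕ} {Q : Matrix (Fin n) (Fin n) ℂ} (hQ : Q.IsHermitian)
    {s : ℝ} (hs : 0 < s) : IsUnit (Q ^ 2 + (s : ℂ) • (1 : Matrix (Fin n) (Fin n) ℂ)).det := by
  have h1 : (Q ^ 2).PosSemidef := by
    have := posSemidef_conjTranspose_mul_self Q
    rwa [hQ.eq, ← pow_two] at this
  have h2 : ((s : ℂ) • (1 : Matrix (Fin n) (Fin n) ℂ)).PosDef :=
    PosDef.one.smul (by exact_mod_cast hs)
  rw [← isUnit_iff_isUnit_det, add_comm]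
  exact (h2.add_posSemidef h1).isUnit

/-- All shifted residuals are multiples of the same Lanczos vector `w`. -/
lemma shifted_residual_eq {n k : ℕ} {Q : Matrix (Fin n) (Fin n) ℂ}
    {V : Matrix (Fin n) (Fin k) ℂ} {T : Matrix (Fin k) (Fin k) ℝ} {β : ℂ} {w : Fin n → ℂ}
    {z l : Fin k} {c : ℂ} {v : Fin n → ℂ} (hv : c • (V *ᵥ Pi.single z 1) = v)
    (hrel : Q ^ 2 * V = V * T.map (algebraMap ℝ ℂ) + β • vecMulVec w (Pi.single l 1))
    {s : ℝ} (hs : IsUnit (T + s • 1).det) :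
    v - (Q ^ 2 + (s : ℂ) • 1) *ᵥ
        (c • (V *ᵥ (((T + s • 1)⁻¹.map (algebraMap ℝ ℂ)) *ᵥ Pi.single z 1))) =
      (-(c * β * (((T + s • 1)⁻¹ l z : ℝ) : ℂ))) • w := by
  set S := (T + s • 1)⁻¹.map (algebraMap ℝ ℂ) with hS
  have hinv : (T.map (algebraMap ℝ ℂ) + (s : ℂ) • 1) * S = 1 := by
    have h1 : T.map (algebraMap ℝ ℂ) + (s : ℂ) • 1 = (T + s • 1).map (algebraMap ℝ ℂ) := by
      ext i j
      by_cases h : i = j <;> simp [Matrix.one_apply, h]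
    rw [h1, hS, ← Matrix.map_mul, mul_nonsing_inv _ hs]
    simp
  have hmat : (Q ^ 2 + (s : ℂ) • 1) * V =
      V * (T.map (algebraMap ℝ ℂ) + (s : ℂ) • 1) + β • vecMulVec w (Pi.single l 1) := by
    rw [Matrix.add_mul, hrel, Matrix.mul_add]
    simp only [Matrix.smul_mul, Matrix.mul_smul, Matrix.one_mul, Matrix.mul_one]
    abel
  have hSl : (Pi.single l 1 : Fin k → ℂ) ⬝ᵥ S *ᵥ Pi.single z 1 =
      (((T + s • 1)⁻¹ l z : ℝ) : ℂ) := by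
    simp [hS]
  rw [mulVec_smul, mulVec_mulVec, hmat, add_mulVec, mulVec_mulVec, Matrix.mul_assoc, hinv,
    Matrix.mul_one, smul_add, hv, smul_mulVec, vecMulVec_mulVec, hSl]
  ext i
  simp
  ring

/-- Increasing the shift contracts the corner entry of `(T + s I)⁻¹`: its numerator is independent
of the shift, and its denominator `det (T + s I)` is increasing. -/
lemma corner_inv_contract {k : ℕ} (hk : 0 < k) {T : Matrix (Fin k) (Fin k) ℝ}
    (hT : T.PosSemidef)
    (hTtri : ∀ i j : Fin k, 1 < ((i : ℤ) - (j : ℤ)).natAbs → T i j = 0)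
    {s t : ℝ} (hs : 0 < s) (hst : s ≤ t) :
    ∃ ρ : ℝ, 0 ≤ ρ ∧ ρ ≤ 1 ∧
      (T + t • 1)⁻¹ ⟨k - 1, Nat.sub_lt hk one_pos⟩ ⟨0, hk⟩ =
        ρ * (T + s • 1)⁻¹ ⟨k - 1, Nat.sub_lt hk one_pos⟩ ⟨0, hk⟩ := by
  obtain ⟨k, rfl⟩ : ∃ k', k = k' + 1 := ⟨k - 1, by omega⟩
  have hpos : ∀ r : ℝ, 0 < r → 0 < (T + r • 1).det := fun r hr => by
    rw [det_add_smul_one hT.1]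
    exact Finset.prod_pos fun j _ => add_pos_of_nonneg_of_pos (hT.eigenvalues_nonneg j) hr
  have hle : (T + s • 1).det ≤ (T + t • 1).det := by
    rw [det_add_smul_one hT.1, det_add_smul_one hT.1]
    refine Finset.prod_le_prod (fun j _ => ?_) fun j _ => by gcongr
    exact add_nonneg (hT.eigenvalues_nonneg j) hs.le
  have hs0 := hpos s hs
  have ht0 := hpos t (hs.trans_le hst)
  have hentry : ∀ r : ℝ, (T + r • 1)⁻¹ (Fin.last k) 0 =
      (T + r • 1).det⁻¹ * ((-1) ^ k * ∏ i : Fin k, T i.succ i.castSucc) := fun r => by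
    rw [inv_def, Matrix.smul_apply, adjugate_corner T hTtri, Ring.inverse_eq_inv', smul_eq_mul]
  refine ⟨(T + s • 1).det / (T + t • 1).det, by positivity, (div_le_one ht0).2 hle, ?_⟩
  change (T + t • 1)⁻¹ (Fin.last k) 0 = _ * (T + s • 1)⁻¹ (Fin.last k) 0
  rw [hentry, hentry]
  field_simp

/-- Damping the nonnegative weights of `r(t) = ∑ ωᵢ t / (t² + τᵢ)` by factors in `[0, 1]` keeps its
modulus below `1 + δ`, because all summands share the sign of `t`. -/
lemma abs_damped_sum_le {m : ℕ} {ω τ ρ : Fin m → ℝ} (hω : ∀ i, 0 ≤ ω i) (hτ : ∀ i, 0 < τ i)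
    (hρ0 : ∀ i, 0 ≤ ρ i) (hρ1 : ∀ i, ρ i ≤ 1) {t δ : ℝ}
    (h : |Real.sign t - ∑ i, ω i * (t / (t ^ 2 + τ i))| ≤ δ) :
    |∑ i, ω i * ρ i * (t / (t ^ 2 + τ i))| ≤ 1 + δ := by
  have hsum : ∀ c : Fin m → ℝ, ∑ i, c i * (t / (t ^ 2 + τ i)) =
      t * ∑ i, c i / (t ^ 2 + τ i) := fun c => by
    rw [Finset.mul_sum]
    exact Finset.sum_congr rfl fun i _ => by ring
  have hden : ∀ i, 0 < t ^ 2 + τ i := fun i => by have := hτ i; positivity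
  have hle : |∑ i, ω i * ρ i * (t / (t ^ 2 + τ i))| ≤ |∑ i, ω i * (t / (t ^ 2 + τ i))| := by
    rw [hsum, hsum, abs_mul, abs_mul]
    refine mul_le_mul_of_nonneg_left ?_ (abs_nonneg t)
    refine abs_le_abs_of_nonneg (Finset.sum_nonneg fun i _ => ?_)
      (Finset.sum_le_sum fun i _ => ?_)
    · exact div_nonneg (mul_nonneg (hω i) (hρ0 i)) (hden i).le
    · exact div_le_div_of_nonneg_right (mul_le_of_le_one_right (hω i) (hρ1 i)) (hden i).le
  have hsign : |Real.sign t| ≤ 1 := by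
    rcases Real.sign_apply_eq t with h | h | h <;> simp [h]
  have h3 := abs_sub_abs_le_abs_sub (∑ i, ω i * (t / (t ^ 2 + τ i))) (Real.sign t)
  rw [abs_sub_comm] at h3
  linarith

/-- Error bound for the multishift-CG / partial fraction expansion
approximation of `sign(Q)v`: with a rational approximation
`r(t) = ∑ᵢ ωᵢ t/(t² + τᵢ)` satisfying `|sign(t) - r(t)| ≤ ε/2` on
`[-b,-a] ∪ [a,b] ⊇ spec(Q)`, `ωᵢ ≥ 0`, `0 < τ₁ ≤ … ≤ τ_m`, the Lanczos relation
`Q² V̂ = V̂ T̂ + β̂ v̂ e_kᵀ`, the multishift-CG iterates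
`x_k^i = V̂ (T̂ + τᵢ I)⁻¹ e₁ ‖v‖₂`, residuals `r_k^i = v - (Q² + τᵢ I) x_k^i`,
`x^{pfe} = ∑ᵢ ωᵢ Q (Q² + τᵢ I)⁻¹ v`, and `x_k = ∑ᵢ ωᵢ Q x_k^i`, one has
`‖x^{pfe} − x_k‖₂ ≤ (1 + ε/2) ‖r_k^1‖₂`. -/
theorem multishift_cg_pfe_error_bound {n k m : ℕ} (hk : 0 < k) (hm : 0 < m)
    (Q : Matrix (Fin n) (Fin n) ℂ) (hQ : Q.IsHermitian) (hQinv : IsUnit Q.det)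
    (a b : ℝ) (ha : 0 < a) (hab : a ≤ b)
    (hspec : ∀ i, hQ.eigenvalues i ∈ Set.Icc (-b) (-a) ∪ Set.Icc a b)
    (v : Fin n → ℂ) (hv : v ≠ 0)
    (ω τ : Fin m → ℝ) (hω : ∀ i, 0 ≤ ω i) (hτpos : ∀ i, 0 < τ i) (hτmono : Monotone τ)
    (ε : ℝ) (hε : 0 < ε)
    (hrat : ∀ t : ℝ, t ∈ Set.Icc (-b) (-a) ∪ Set.Icc a b →
      |Real.sign t - ∑ i, ω i * (t / (t ^ 2 + τ i))| ≤ ε / 2)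
    (V : Matrix (Fin n) (Fin k) ℂ) (hVorth : Vᴴ * V = 1)
    (hV1 : V *ᵥ Pi.single (⟨0, hk⟩ : Fin k) 1 = (e2norm v : ℂ)⁻¹ • v)
    (T : Matrix (Fin k) (Fin k) ℝ) (hTsym : T.IsHermitian)
    (hTtri : ∀ i j : Fin k, 1 < ((i : ℤ) - (j : ℤ)).natAbs → T i j = 0)
    (hTsub : ∀ (i : ℕ) (h : i + 1 < k), 0 < T ⟨i + 1, h⟩ ⟨i, Nat.lt_of_succ_lt h⟩)
    (βh : ℝ) (hβ : 0 < βh)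
    (vh : Fin n → ℂ) (hvh : e2norm vh = 1) (hvhV : star vh ᵥ* V = 0)
    (hrel : Q ^ 2 * V = V * T.map (algebraMap ℝ ℂ) +
      (βh : ℂ) • vecMulVec vh (Pi.single (⟨k - 1, Nat.sub_lt hk one_pos⟩ : Fin k) 1))
    (xk : Fin m → Fin n → ℂ)
    (hxk : ∀ i, xk i = (e2norm v : ℂ) •
      (V *ᵥ (((T + τ i • 1)⁻¹.map (algebraMap ℝ ℂ)) *ᵥ Pi.single (⟨0, hk⟩ : Fin k) 1)))
    (rk : Fin m → Fin n → ℂ)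
    (hrk : ∀ i, rk i = v - (Q ^ 2 + (τ i : ℂ) • 1) *ᵥ xk i)
    (xpfe xsum : Fin n → ℂ)
    (hxpfe : xpfe = ∑ i, (ω i : ℂ) • (Q *ᵥ ((Q ^ 2 + (τ i : ℂ) • 1)⁻¹ *ᵥ v)))
    (hxsum : xsum = ∑ i, (ω i : ℂ) • (Q *ᵥ xk i)) :
    e2norm (xpfe - xsum) ≤ (1 + ε / 2) * e2norm (rk ⟨0, hm⟩) := by
  have hT := lanczos_posSemidef hQ hVorth hTsym _ hvhV _ hrel
  have hdet : ∀ i, IsUnit (T + τ i • 1).det := fun i => by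
    rw [det_add_smul_one hTsym]
    exact (Finset.prod_pos fun j _ =>
      add_pos_of_nonneg_of_pos (hT.eigenvalues_nonneg j) (hτpos i)).ne'.isUnit
  have hv0 : (e2norm v : ℂ) ≠ 0 := by
    intro h0
    have h1 := e2norm_sq v
    rw [Complex.ofReal_eq_zero.1 h0, zero_pow two_ne_zero, eq_comm,
      Finset.sum_eq_zero_iff_of_nonneg fun _ _ => by positivity] at h1
    exact hv (funext fun i => by simpa using h1 i (Finset.mem_univ i))
  have hVv : (e2norm v : ℂ) • (V *ᵥ Pi.single (⟨0, hk⟩ : Fin k) 1) = v := by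
    rw [hV1, smul_smul, mul_inv_cancel₀ hv0, one_smul]
  choose ρ hρ0 hρ1 hρ using fun i => corner_inv_contract hk hT hTtri (hτpos ⟨0, hm⟩)
    (hτmono (show (⟨0, hm⟩ : Fin m) ≤ i from Nat.zero_le _))
  have hres : ∀ i, rk i = (ρ i : ℂ) • rk ⟨0, hm⟩ := fun i => by
    rw [hrk, hrk, hxk, hxk, shifted_residual_eq hVv hrel (hdet i),
      shifted_residual_eq hVv hrel (hdet _), hρ i, smul_smul]
    congr 1
    push_cast
    ring
  set U := (hQ.eigenvectorUnitary : Matrix (Fin n) (Fin n) ℂ) with hU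
  have hUU : Uᴴᴴ * Uᴴ = 1 := by
    rw [conjTranspose_conjTranspose]
    exact Unitary.coe_mul_star_self hQ.eigenvectorUnitary
  have herr : xpfe - xsum =
      ∑ i, (ω i : ℂ) • (Q *ᵥ ((Q ^ 2 + (τ i : ℂ) • 1)⁻¹ *ᵥ v - xk i)) := by
    rw [hxpfe, hxsum, ← Finset.sum_sub_distrib]
    exact Finset.sum_congr rfl fun i _ => by rw [mulVec_sub, smul_sub]
  -- In the eigenbasis, the error equation `(Q² + τᵢ I) e = rᵢ` is solved coordinatewise.
  have hcoord : ∀ i j, (Uᴴ *ᵥ ((Q ^ 2 + (τ i : ℂ) • 1)⁻¹ *ᵥ v - xk i)) j =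
      ((ρ i / (hQ.eigenvalues j ^ 2 + τ i) : ℝ) : ℂ) * (Uᴴ *ᵥ rk ⟨0, hm⟩) j := fun i j => by
    have he : (Q ^ 2 + (τ i : ℂ) • 1) *ᵥ ((Q ^ 2 + (τ i : ℂ) • 1)⁻¹ *ᵥ v - xk i) =
        (ρ i : ℂ) • rk ⟨0, hm⟩ := by
      rw [mulVec_sub, mulVec_mulVec, mul_nonsing_inv _ (sq_add_smul_isUnit hQ (hτpos i)),
        one_mulVec, ← hrk, hres]
    generalize (Q ^ 2 + (τ i : ℂ) • 1)⁻¹ *ᵥ v - xk i = y at he ⊢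
    have h2 := congrFun (congrArg (Uᴴ *ᵥ ·) he) j
    simp only [add_mulVec, smul_mulVec, one_mulVec, pow_two Q, ← mulVec_mulVec _ Q Q, mulVec_add,
      mulVec_smul, Pi.add_apply, Pi.smul_apply, smul_eq_mul, hU, eigencoord_mulVec] at h2
    have hden : ((hQ.eigenvalues j : ℂ) ^ 2 + (τ i : ℂ)) ≠ 0 := by
      have := hτpos i
      exact_mod_cast (by positivity : hQ.eigenvalues j ^ 2 + τ i ≠ 0)
    push_cast
    rw [div_mul_eq_mul_div, eq_div_iff hden, hU, ← h2]
    ring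
  have hfinal : ∀ j, (Uᴴ *ᵥ (xpfe - xsum)) j =
      ((∑ i, ω i * ρ i * (hQ.eigenvalues j / (hQ.eigenvalues j ^ 2 + τ i)) : ℝ) : ℂ) *
        (Uᴴ *ᵥ rk ⟨0, hm⟩) j := fun j => by
    rw [herr, mulVec_sum, Finset.sum_apply, Complex.ofReal_sum, Finset.sum_mul]
    refine Finset.sum_congr rfl fun i _ => ?_
    rw [mulVec_smul, Pi.smul_apply, eigencoord_mulVec hQ, ← hU, hcoord, smul_eq_mul]
    push_cast
    ring
  rw [← e2norm_unitary hUU (xpfe - xsum), ← e2norm_unitary hUU (rk _)]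
  refine e2norm_le_of_coord (by positivity) fun j => ?_
  rw [hfinal, norm_mul, Complex.norm_real, Real.norm_eq_abs]
  exact mul_le_mul_of_nonneg_right
    (abs_damped_sum_le hω hτpos hρ0 hρ1 (hrat _ (hspec j))) (norm_nonneg _)
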